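/- arXiv:1811.01847 — 3 statements merged into one kernel-verified Lean document; each statement's English description precedes it below -/
import Mathlib

section
/- Let B₁ ⊂ ℝ^d be the open unit ball and let {f_j} ⊂ L¹(B₁) be a sequence such that: (i) ∫_{B₁} f_j φ dx → 0 for every φ ∈ C_c^∞(B₁); (ii) the negative parts f_j⁻ := max{−f_j, 0} converge to zero in Lebesgue measure, i.e. for every δ > 0 the Lebesgue measure of {x ∈ B₁ : f_j⁻(x) > δ} tends to 0 as j → ∞; (iii) the family {f_j⁻} is equiintegrable, i.e. for every ε > 0 there is δ > 0 such that ∫_A f_j⁻ dx ≤ ε for all j and all measurable A ⊆ B₁ with |A| < δ. Then f_j → 0 in L¹_loc(B₁): ∫_K |f_j| dx → 0 for every compact K ⊂ B₁. (Lemma 2.2.) -/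
open MeasureTheory Metric Filter Topology

noncomputable section

theorem statement4 {d : ℕ}
    (f : ℕ → EuclideanSpace ℝ (Fin d) → ℝ)
    (hint : ∀ j, IntegrableOn (f j) (ball (0 : EuclideanSpace ℝ (Fin d)) 1) volume)
    (h1 : ∀ φ : EuclideanSpace ℝ (Fin d) → ℝ, ContDiff ℝ (⊤ : ℕ∞) φ → HasCompactSupport φ →
      tsupport φ ⊆ ball (0 : EuclideanSpace ℝ (Fin d)) 1 →
      Tendsto (fun j => ∫ x in ball (0 : EuclideanSpace ℝ (Fin d)) 1, f j x * φ x) atTop (𝓝 0))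
    (h2 : ∀ δ : ℝ, 0 < δ →
      Tendsto (fun j =>
          volume {x ∈ ball (0 : EuclideanSpace ℝ (Fin d)) 1 | δ < max (-(f j x)) 0})
        atTop (𝓝 0))
    (h3 : ∀ ε : ℝ, 0 < ε → ∃ δ : ℝ, 0 < δ ∧
      ∀ j, ∀ A : Set (EuclideanSpace ℝ (Fin d)), A ⊆ ball 0 1 → MeasurableSet A →
        volume A < ENNReal.ofReal δ → ∫ x in A, max (-(f j x)) 0 ≤ ε) :
    ∀ K : Set (EuclideanSpace ℝ (Fin d)), K ⊆ ball 0 1 → IsCompact K →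
      Tendsto (fun j => ∫ x in K, |f j x|) atTop (𝓝 0) := by
  intro K hKB hK
  set B : Set (EuclideanSpace ℝ (Fin d)) := ball 0 1 with hB
  have hBm : MeasurableSet B := measurableSet_ball
  have hBfin : volume B ≠ ⊤ := measure_ball_lt_top.ne
  have hneg : ∀ j, IntegrableOn (fun x => max (-(f j x)) 0) B volume := fun j =>
    (hint j).neg.pos_part
  have step1 : Tendsto (fun j => ∫ x in B, max (-(f j x)) 0) atTop (𝓝 0) := by
    rw [Metric.tendsto_atTop]
    intro ε hε
    obtain ⟨δ, hδ, hA⟩ := h3 (ε / 2) (by positivity)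
    set v : ℝ := volume.real B with hv
    have hv0 : 0 ≤ v := measureReal_nonneg
    set η : ℝ := ε / (4 * (v + 1)) with hη
    have hηpos : 0 < η := by positivity
    have hηv : η * v < ε / 2 := by
      rw [hη, div_mul_eq_mul_div, div_lt_iff₀ (by positivity)]
      nlinarith
    have hev := (h2 η hηpos).eventually_lt_const (ENNReal.ofReal_pos.2 hδ)
    obtain ⟨N, hN⟩ := eventually_atTop.1 hev
    refine ⟨N, fun j hj => ?_⟩
    have hSj := hN j hj
    set S := {x ∈ B | η < max (-(f j x)) 0} with hS
    set T := toMeasurable volume S ∩ B with hT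
    have hTm : MeasurableSet T := (measurableSet_toMeasurable _ _).inter hBm
    have hTB : T ⊆ B := Set.inter_subset_right
    have hTv : volume T < ENNReal.ofReal δ :=
      lt_of_le_of_lt (measure_mono Set.inter_subset_left)
        (by rw [measure_toMeasurable]; exact hSj)
    have e1 := hA j T hTB hTm hTv
    have e2 : ∫ x in B \ T, max (-(f j x)) 0 ≤ η * v := by
      have hc : IntegrableOn (fun _ : EuclideanSpace ℝ (Fin d) => η) (B \ T) volume :=
        integrableOn_const (ne_top_of_le_ne_top hBfin (measure_mono Set.diff_subset))
      calc ∫ x in B \ T, max (-(f j x)) 0 ≤ ∫ x in B \ T, η := by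
            refine setIntegral_mono_on ((hneg j).mono_set Set.diff_subset) hc
              (hBm.diff hTm) ?_
            intro x hx
            by_contra hlt
            exact hx.2 ⟨subset_toMeasurable _ _ ⟨hx.1, not_le.1 hlt⟩, hx.1⟩
        _ = volume.real (B \ T) * η := by simp
        _ ≤ η * v := by
            rw [mul_comm]
            exact mul_le_mul_of_nonneg_left
              (measureReal_mono Set.diff_subset hBfin) hηpos.le
    have e3 := integral_diff hTm (hneg j) hTB
    have e4 : 0 ≤ ∫ x in B, max (-(f j x)) 0 :=
      integral_nonneg fun x => le_max_right _ _
    rw [Real.dist_eq, sub_zero, abs_of_nonneg e4]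
    linarith
  obtain ⟨r, ⟨hr0, hr1⟩, hKr⟩ := exists_pos_lt_subset_ball one_pos hK.isClosed hKB
  let φ : ContDiffBump (0 : EuclideanSpace ℝ (Fin d)) :=
    ⟨r, (r + 1) / 2, hr0, by linarith⟩
  have hφB : tsupport φ ⊆ B := by
    rw [φ.tsupport_eq]
    exact closedBall_subset_ball (by change (r + 1) / 2 < 1; linarith)
  have hφ := h1 φ φ.contDiff φ.hasCompactSupport hφB
  have hlim := hφ.add (step1.const_mul 2)
  rw [mul_zero, add_zero] at hlim
  refine squeeze_zero (fun j => integral_nonneg fun x => abs_nonneg _) (fun j => ?_) hlim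
  have hfφ : IntegrableOn (fun x => f j x * φ x) B volume := by
    refine Integrable.mul_bdd (c := 1) (hint j) φ.continuous.aestronglyMeasurable ?_
    refine Eventually.of_forall fun x => ?_
    rw [Real.norm_eq_abs, abs_of_nonneg φ.nonneg]
    exact φ.le_one
  have key : ∀ x, |f j x| * φ x ≤ f j x * φ x + 2 * max (-(f j x)) 0 := by
    intro x
    have a := φ.nonneg (x := x)
    have b := φ.le_one (x := x)
    rcases le_total 0 (f j x) with h | h
    · rw [abs_of_nonneg h, max_eq_right (by linarith)]; linarith
    · rw [abs_of_nonpos h, max_eq_left (by linarith)]; nlinarith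
  have hsum : IntegrableOn (fun x => f j x * φ x + 2 * max (-(f j x)) 0) B volume :=
    hfφ.add ((hneg j).const_mul 2)
  have hnn : ∀ x, 0 ≤ f j x * φ x + 2 * max (-(f j x)) 0 := fun x =>
    le_trans (mul_nonneg (abs_nonneg _) φ.nonneg) (key x)
  calc ∫ x in K, |f j x| ≤ ∫ x in K, (f j x * φ x + 2 * max (-(f j x)) 0) := by
        refine setIntegral_mono_on ((hint j).mono_set hKB).abs (hsum.mono_set hKB)
          hK.measurableSet fun x hx => ?_
        have h1x : φ x = 1 := φ.one_of_mem_closedBall (ball_subset_closedBall (hKr hx))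
        have := key x
        rw [h1x] at this ⊢
        linarith
    _ ≤ ∫ x in B, (f j x * φ x + 2 * max (-(f j x)) 0) :=
        setIntegral_mono_set hsum (Eventually.of_forall hnn) hKB.eventuallyLE
    _ = _ := by
        rw [integral_add hfφ ((hneg j).const_mul 2), integral_const_mul]
end
end

section
/- Let d ≥ 1, let ξ ∈ ℝ^d ∖ {0}, and let M ∈ ℝ^{d×d} be symmetric. Then ξ_k (Mξ)_j + ξ_j (Mξ)_k − ξ_j ξ_k tr(M) − |ξ|² M_{jk} = 0 for all j,k ∈ {1,…,d} if and only if M = a ⊙ ξ := (a ⊗ ξ + ξ ⊗ a)/2 for some a ∈ ℝ^d. (The computation ker(curl curl)(ξ) = {a ⊙ ξ : a ∈ ℝ^d} from Section 3.2.) -/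
theorem statement11 {d : ℕ} (hd : 1 ≤ d) (ξ : Fin d → ℝ) (hξ : ξ ≠ 0)
    (M : Matrix (Fin d) (Fin d) ℝ) (hM : M.IsSymm) :
    (∀ j k, ξ k * M.mulVec ξ j + ξ j * M.mulVec ξ k - ξ j * ξ k * M.trace
        - (∑ i, ξ i ^ 2) * M j k = 0) ↔
      ∃ a : Fin d → ℝ, M = Matrix.of fun j k => (a j * ξ k + ξ j * a k) / 2 := by
  constructor
  · intro h
    have hs : (∑ i, ξ i ^ 2) ≠ 0 := by
      intro h0
      apply hξ
      rw [Finset.sum_eq_zero_iff_of_nonneg (fun i _ => sq_nonneg (ξ i))] at h0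
      funext i
      exact pow_eq_zero_iff (two_ne_zero) |>.mp (h0 i (Finset.mem_univ i))
    refine ⟨fun j => (2 * M.mulVec ξ j - ξ j * M.trace) / (∑ i, ξ i ^ 2), ?_⟩
    ext j k
    have := h j k
    simp only [Matrix.of_apply]
    generalize (∑ i, ξ i ^ 2) = s at *
    field_simp
    linarith
  · rintro ⟨a, rfl⟩ j k
    have hv : ∀ j, (Matrix.of fun j k => (a j * ξ k + ξ j * a k) / 2).mulVec ξ j
        = (a j * (∑ i, ξ i ^ 2) + ξ j * ∑ i, a i * ξ i) / 2 := by
      intro j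
      simp only [Matrix.mulVec, dotProduct, Matrix.of_apply]
      rw [Finset.mul_sum, Finset.mul_sum, ← Finset.sum_add_distrib, Finset.sum_div]
      exact Finset.sum_congr rfl fun i _ => by ring
    have ht : (Matrix.of fun j k => (a j * ξ k + ξ j * a k) / 2).trace
        = ∑ i, a i * ξ i := by
      simp only [Matrix.trace, Matrix.diag, Matrix.of_apply]
      exact Finset.sum_congr rfl fun i _ => by ring
    rw [hv, hv, ht, Matrix.of_apply]
    ring
end

section
/- Let d ≥ 2. If M ∈ ℝ^{d×d} has the property that every (d−1)-dimensional linear subspace π of ℝ^d contains some ξ ≠ 0 for which M = a ⊙ ξ := (a ⊗ ξ + ξ ⊗ a)/2 for some a ∈ ℝ^d, then M = 0. (The computation Λ^{d−1}_{curl curl} = {0} underlying the BD dimensional estimate in Section 3.2.) -/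
theorem statement12 {d : ℕ} (hd : 2 ≤ d) (M : Matrix (Fin d) (Fin d) ℝ)
    (h : ∀ π : Submodule ℝ (Fin d → ℝ), Module.finrank ℝ π = d - 1 →
      ∃ ξ ∈ π, ξ ≠ 0 ∧ ∃ a : Fin d → ℝ,
        M = Matrix.of fun j k => (a j * ξ k + ξ j * a k) / 2) :
    M = 0 := by
  have key : ∀ f : (Fin d → ℝ) →ₗ[ℝ] ℝ, f ≠ 0 → ∃ ξ a : Fin d → ℝ, f ξ = 0 ∧
      ∀ j k, M j k = (a j * ξ k + ξ j * a k) / 2 := by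
    intro f hf
    have h1 := LinearMap.finrank_range_add_finrank_ker f
    rw [LinearMap.range_eq_top.2 (LinearMap.surjective hf), finrank_top,
      Module.finrank_self, Module.finrank_fin_fun] at h1
    obtain ⟨ξ, hξ, -, a, ha⟩ := h (LinearMap.ker f) (by omega)
    refine ⟨ξ, a, hξ, fun j k => ?_⟩
    rw [ha]; rfl
  have hdiag : ∀ i, M i i = 0 := by
    intro i
    obtain ⟨ξ, a, h0, hM⟩ := key (LinearMap.proj i) (fun e => by
      have := LinearMap.congr_fun e (Pi.single i 1)
      simp at this)
    have h0 : ξ i = 0 := h0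
    rw [hM, h0]; simp
  ext i j
  by_cases hij : i = j
  · subst hij; exact hdiag i
  obtain ⟨ξ, a, h0, hM⟩ := key ((LinearMap.proj i : (Fin d → ℝ) →ₗ[ℝ] ℝ) + (LinearMap.proj j : (Fin d → ℝ) →ₗ[ℝ] ℝ)) (fun e => by
      have := LinearMap.congr_fun e (Pi.single i 1)
      simp [Ne.symm hij] at this)
  have h0 : ξ i + ξ j = 0 := h0
  have h1 := hM i i
  have h2 := hM j j
  rw [hdiag] at h1 h2
  have h3 : ξ j = - ξ i := by linarith
  rw [Matrix.zero_apply, hM, h3]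
  rw [h3] at h2
  linarith
end
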